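/- arXiv:1909.06863 — 5 statements merged into one kernel-verified Lean document; each statement's English description precedes it below -/
import Mathlib

section
/- Let V : ℤ → ℝ be positive and inf-finite. If (h_n) is a sequence in B_V that is uniformly bounded below and whose pointwise supremum sup_n h_n belongs to B_V, then (h_n) has a subsequence that converges in the metric space (B_V, w). -/
open Filter Topology

/-- `V` is inf-finite: each sublevel set is finite. -/
def InfFinite (V : ℤ → ℝ) : Prop := ∀ K : ℝ, {x : ℤ | V x ≤ K}.Finite

/-- `h ∈ B_V`: `h` is bounded below and `|h(x)|/V(x) → 0` as `|x| → ∞`. -/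
def MemBV (V : ℤ → ℝ) (h : ℤ → ℝ) : Prop :=
  BddBelow (Set.range h) ∧
    Tendsto (fun x : ℤ => |h x| / V x) Filter.cofinite (nhds 0)

/-- If `(h_n) ⊆ B_V` is uniformly bounded below and its pointwise supremum
belongs to `B_V`, then `(h_n)` has a subsequence converging in the metric
`w(h,h') = sup_x |h(x) - h'(x)|/V(x)` to an element of `B_V`. -/
theorem statement1 (V : ℤ → ℝ) (hVpos : ∀ x, 0 < V x) (hVfin : InfFinite V)
    (h : ℕ → ℤ → ℝ) (hmem : ∀ n, MemBV V (h n))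
    (hlb : ∃ c : ℝ, ∀ n x, c ≤ h n x)
    (hba : ∀ x, BddAbove (Set.range fun n => h n x))
    (hsup : MemBV V fun x => ⨆ n, h n x) :
    ∃ φ : ℕ → ℕ, StrictMono φ ∧ ∃ g : ℤ → ℝ, MemBV V g ∧
      ∀ δ > (0 : ℝ), ∃ N : ℕ, ∀ k ≥ N, ∀ x : ℤ, |h (φ k) x - g x| / V x ≤ δ := by
  obtain ⟨c, hc⟩ := hlb
  set S : ℤ → ℝ := fun x => ⨆ n, h n x with hS
  have hle : ∀ n x, h n x ≤ S x := fun n x => le_ciSup (hba x) n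
  have hcomp : IsCompact (Set.univ.pi fun x : ℤ => Set.Icc c (S x)) :=
    isCompact_univ_pi fun x => isCompact_Icc
  obtain ⟨g, hg, φ, hφ, hlim⟩ := hcomp.tendsto_subseq (x := h)
    (fun n x _ => ⟨hc n x, hle n x⟩)
  have hgc : ∀ x, c ≤ g x := fun x => (hg x (Set.mem_univ x)).1
  have hgS : ∀ x, g x ≤ S x := fun x => (hg x (Set.mem_univ x)).2
  have hVtop : Tendsto V cofinite atTop := by
    rw [tendsto_atTop]
    intro K
    rw [eventually_cofinite]
    refine (hVfin K).subset fun x hx => ?_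
    simp only [Set.mem_setOf_eq, not_le] at hx ⊢
    exact hx.le
  have hM : Tendsto (fun x => (|c| + |S x|) / V x) cofinite (nhds 0) := by
    have h1 : Tendsto (fun x => |c| / V x) cofinite (nhds 0) := hVtop.const_div_atTop _
    have h2 := h1.add hsup.2
    simp only [add_zero] at h2
    refine h2.congr fun x => ?_
    rw [add_div]
  have hb : ∀ x y, c ≤ y → y ≤ S x → |y| ≤ |c| + |S x| := by
    intro x y h1 h2
    rw [abs_le]
    constructor
    · linarith [neg_abs_le c, abs_nonneg (S x)]
    · linarith [le_abs_self (S x), abs_nonneg c]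
  refine ⟨φ, hφ, g, ⟨⟨c, ?_⟩, ?_⟩, ?_⟩
  · rintro _ ⟨x, rfl⟩
    exact hgc x
  · refine squeeze_zero (fun x => div_nonneg (abs_nonneg _) (hVpos x).le) (fun x => ?_) hM
    exact div_le_div_of_nonneg_right (hb x _ (hgc x) (hgS x)) (hVpos x).le
  · intro δ hδ
    have hfin : {x | ¬ (|c| + |S x|) / V x < δ / 2}.Finite :=
      eventually_cofinite.1 (hM.eventually (gt_mem_nhds (half_pos hδ)))
    have hev : ∀ᶠ k in atTop, ∀ x ∈ {x | ¬ (|c| + |S x|) / V x < δ / 2},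
        |h (φ k) x - g x| / V x ≤ δ := by
      rw [Set.Finite.eventually_all hfin]
      intro x _
      have hx : Tendsto (fun k => h (φ k) x) atTop (nhds (g x)) := (tendsto_pi_nhds.1 hlim) x
      have := (Metric.tendsto_nhds.1 hx) (δ * V x) (mul_pos hδ (hVpos x))
      filter_upwards [this] with k hk
      rw [Real.dist_eq] at hk
      exact (div_le_iff₀ (hVpos x)).2 hk.le
    obtain ⟨N, hN⟩ := eventually_atTop.1 hev
    refine ⟨N, fun k hk x => ?_⟩
    by_cases hx : (|c| + |S x|) / V x < δ / 2
    · have h1 := hb x _ (hc (φ k) x) (hle (φ k) x)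
      have h2 := hb x _ (hgc x) (hgS x)
      rw [div_lt_iff₀ (hVpos x)] at hx
      rw [div_le_iff₀ (hVpos x)]
      have h3 := abs_sub (h (φ k) x) (g x)
      linarith
    · exact hN k hk x hx
end

section
/- Let V : ℤ → ℝ be positive and inf-finite. If (h_n) is a sequence in B_V that is uniformly bounded below, whose pointwise supremum sup_n h_n belongs to B_V, and which converges pointwise to a function h, then h ∈ B_V and w(h_n,h) → 0, i.e. pointwise convergence of such a sequence implies convergence in the metric w. -/
open Filter Topology

/-- If `(h_n) ⊆ B_V` is uniformly bounded below, its pointwise supremum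
belongs to `B_V`, and `h_n → g` pointwise, then `g ∈ B_V` and `w(h_n, g) → 0`, where
`w(h,h') = sup_x |h(x) - h'(x)|/V(x)`. -/
theorem statement2 (V : ℤ → ℝ) (hVpos : ∀ x, 0 < V x) (hVfin : InfFinite V)
    (h : ℕ → ℤ → ℝ) (hmem : ∀ n, MemBV V (h n))
    (hlb : ∃ c : ℝ, ∀ n x, c ≤ h n x)
    (hba : ∀ x, BddAbove (Set.range fun n => h n x))
    (hsup : MemBV V fun x => ⨆ n, h n x)
    (g : ℤ → ℝ) (hp : ∀ x, Tendsto (fun n => h n x) atTop (nhds (g x))) :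
    MemBV V g ∧
      ∀ δ > (0 : ℝ), ∃ N : ℕ, ∀ n ≥ N, ∀ x : ℤ, |h n x - g x| / V x ≤ δ := by
  obtain ⟨c, hc⟩ := hlb
  have hle : ∀ n x, h n x ≤ ⨆ n, h n x := fun n x => le_ciSup (hba x) n
  have hgc : ∀ x, c ≤ g x := fun x => ge_of_tendsto' (hp x) (fun n => hc n x)
  have hgs : ∀ x, g x ≤ ⨆ n, h n x := fun x => le_of_tendsto' (hp x) (fun n => hle n x)
  have key : ∀ x y : ℝ, ∀ z, c ≤ x → x ≤ z → |x| ≤ |c| + |z| := by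
    intro x _ z h1 h2
    rw [abs_le]
    constructor
    · linarith [neg_abs_le c, abs_nonneg z]
    · linarith [le_abs_self z, abs_nonneg c]
  have hVtop : Tendsto V cofinite atTop := by
    rw [tendsto_atTop]
    intro b
    rw [Filter.eventually_cofinite]
    exact (hVfin b).subset (fun x hx => le_of_lt (not_le.mp hx))
  have hM : Tendsto (fun x : ℤ => (|c| + |⨆ n, h n x|) / V x) cofinite (nhds 0) := by
    have h1 : Tendsto (fun x : ℤ => |c| / V x) cofinite (nhds 0) :=
      hVtop.const_div_atTop _
    have h2 := h1.add hsup.2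
    simpa only [add_div, add_zero] using h2
  refine ⟨⟨⟨c, ?_⟩, ?_⟩, ?_⟩
  · rintro _ ⟨x, rfl⟩
    exact hgc x
  · refine squeeze_zero (fun x => div_nonneg (abs_nonneg _) (hVpos x).le) (fun x => ?_) hM
    exact div_le_div_of_nonneg_right (key _ 0 _ (hgc x) (hgs x)) (hVpos x).le
  · intro δ hδ
    have hfar : ∀ᶠ x in cofinite, (|c| + |⨆ n, h n x|) / V x < δ / 2 :=
      hM.eventually_lt_const (half_pos hδ)
    rw [Filter.eventually_cofinite] at hfar
    have hnear : ∀ᶠ n in atTop, ∀ x ∈ {x | ¬ (|c| + |⨆ n, h n x|) / V x < δ / 2},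
        |h n x - g x| / V x ≤ δ := by
      rw [Filter.eventually_all_finite hfar]
      intro x _
      have h3 : Tendsto (fun n => |h n x - g x| / V x) atTop (nhds (|g x - g x| / V x)) :=
        (((hp x).sub_const (g x)).abs).div_const (V x)
      simp only [sub_self, abs_zero, zero_div] at h3
      exact (h3.eventually_lt_const hδ).mono (fun n hn => hn.le)
    obtain ⟨N, hN⟩ := Filter.eventually_atTop.mp hnear
    refine ⟨N, fun n hn x => ?_⟩
    by_cases hx : (|c| + |⨆ n, h n x|) / V x < δ / 2
    · rw [div_lt_iff₀ (hVpos x)] at hx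
      rw [div_le_iff₀ (hVpos x)]
      have a1 := key _ 0 _ (hc n x) (hle n x)
      have a2 := key _ 0 _ (hgc x) (hgs x)
      have a3 := abs_sub (h n x) (g x)
      linarith
    · exact hN n hn x hx
end

section
/- Under Assumption (A): for any family {h^ε}_{0<ε≤ε₀} ∈ 𝓑_V, each t ∈ {1,…,T} and each u ∈ U, the family {Λ^ε_t(·,u;h^ε)}_{0<ε≤ε₀} belongs to 𝓑_V; that is, each Λ^ε_t(·,u;h^ε) is finite and belongs to B_V, the family is uniformly bounded below, and its pointwise supremum sup_{0<ε≤ε₀} Λ^ε_t(·,u;h^ε) belongs to B_V. -/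
open Filter Topology

/-- The setup for a countable-stated (here `ℤ`-stated) risk-sensitive MDP with horizon `T`,
transition kernels `q ε t · x u` (for `0 < ε ≤ eps0`), rate functions `I`, running costs
`f τ t x u` and terminal costs `g τ x`.  The Lyapunov function `V` is positive and inf-finite. -/
structure RSSetup (U : Type*) [MetricSpace U] where
  T : ℕ
  eps0 : ℝ
  eps0_pos : 0 < eps0
  V : ℤ → ℝ
  V_pos : ∀ x, 0 < V x
  V_infFinite : ∀ K : ℝ, {x : ℤ | V x ≤ K}.Finite
  q : ℝ → ℕ → ℤ → U → ℤ → ℝ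
  q_nonneg : ∀ ε ∈ Set.Ioc (0 : ℝ) eps0, ∀ t ∈ Finset.Icc 1 T, ∀ (x : ℤ) (u : U) (z : ℤ),
    0 ≤ q ε t x u z
  q_pmf : ∀ ε ∈ Set.Ioc (0 : ℝ) eps0, ∀ t ∈ Finset.Icc 1 T, ∀ (x : ℤ) (u : U),
    HasSum (q ε t x u) 1
  I : ℕ → ℤ → U → ℤ → ENNReal
  I_subfin : ∀ (t : ℕ) (x : ℤ) (u : U) (K : ENNReal), K ≠ ⊤ → {z : ℤ | I t x u z ≤ K}.Finite
  f : ℕ → ℕ → ℤ → U → ℝ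
  g : ℕ → ℤ → ℝ

namespace RSSetup

variable {U : Type*} [MetricSpace U]

/-- `Λ^ε_t(x,u;h) = ε log ∑_z exp(h(z)/ε) q^ε_t(z;x,u)`. -/
noncomputable def lamE (S : RSSetup U) (ε : ℝ) (t : ℕ) (x : ℤ) (u : U) (h : ℤ → ℝ) : ℝ :=
  ε * Real.log (∑' z : ℤ, Real.exp (h z / ε) * S.q ε t x u z)

/-- `Λ_t(x,u;h) = sup_z [h(z) - I_t(z;x,u)]` (the supremum being over the points where the
rate function is finite). -/
noncomputable def lam (S : RSSetup U) (t : ℕ) (x : ℤ) (u : U) (h : ℤ → ℝ) : ℝ :=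
  sSup ((fun z => h z - (S.I t x u z).toReal) '' {z : ℤ | S.I t x u z ≠ ⊤})

/-- Membership in `B_V`: bounded below and `|h(x)|/V(x) → 0` as `|x| → ∞`. -/
def memBV (S : RSSetup U) (h : ℤ → ℝ) : Prop :=
  BddBelow (Set.range h) ∧
    Tendsto (fun x : ℤ => |h x| / S.V x) Filter.cofinite (nhds 0)

/-- The pointwise supremum `x ↦ sup_{0<ε≤ε₀} h^ε(x)` of a family. -/
noncomputable def supFam (S : RSSetup U) (h : ℝ → ℤ → ℝ) : ℤ → ℝ :=
  fun x => sSup ((fun ε => h ε x) '' Set.Ioc (0 : ℝ) S.eps0)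

/-- Membership of a family `{h^ε}_{0<ε≤ε₀}` in `𝓑_V`: each member is in `B_V`, the family is
uniformly bounded below, and the pointwise supremum `sup_ε h^ε` belongs to `B_V`. -/
def memFam (S : RSSetup U) (h : ℝ → ℤ → ℝ) : Prop :=
  (∀ ε ∈ Set.Ioc (0 : ℝ) S.eps0, S.memBV (h ε)) ∧
  (∃ c : ℝ, ∀ ε ∈ Set.Ioc (0 : ℝ) S.eps0, ∀ x, c ≤ h ε x) ∧
  (∀ x, BddAbove ((fun ε => h ε x) '' Set.Ioc (0 : ℝ) S.eps0)) ∧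
  S.memBV (S.supFam h)

/-- Assumption (A) with parameter `λ₀`. -/
def AssumptionA (S : RSSetup U) (lam0 : ℝ) : Prop :=
  0 < lam0 ∧
  -- (A1): `sup_{0<ε≤ε₀} Λ^ε_t(x,u;λ₀ V) < ∞` (in particular the defining sums converge)
  (∀ t ∈ Finset.Icc 1 S.T, ∀ (x : ℤ) (u : U),
    (∀ ε ∈ Set.Ioc (0 : ℝ) S.eps0,
      Summable fun z : ℤ => Real.exp (lam0 * S.V z / ε) * S.q ε t x u z) ∧
    ∃ C : ℝ, ∀ ε ∈ Set.Ioc (0 : ℝ) S.eps0, S.lamE ε t x u (fun z => lam0 * S.V z) ≤ C) ∧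
  -- (A2): continuity in `u`, and `Λ^ε_t(x,u^ε;h) → Λ_t(x,u;h)` whenever `u^ε → u`
  (∀ t ∈ Finset.Icc 1 S.T, ∀ x : ℤ, ∀ h : ℤ → ℝ, S.memBV h →
    (∀ ε ∈ Set.Ioc (0 : ℝ) S.eps0, Continuous fun u : U => S.lamE ε t x u h) ∧
    (∀ (u : U) (uu : ℝ → U), Tendsto uu (nhdsWithin 0 (Set.Ioi 0)) (nhds u) →
      Tendsto (fun ε => S.lamE ε t x (uu ε) h) (nhdsWithin 0 (Set.Ioi 0))
        (nhds (S.lam t x u h)))) ∧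
  -- (A3): `limsup_{|x|→∞} sup_{0<ε≤ε₀} Λ^ε_t(x,u;λV)/(λV(x)) < K_u` for `λ ∈ (0,λ₀)`
  (∀ t ∈ Finset.Icc 1 S.T, ∀ u : U, ∃ Ku : ℝ, ∀ lam' ∈ Set.Ioo (0 : ℝ) lam0,
    ∃ c < Ku, ∀ᶠ x in (Filter.cofinite : Filter ℤ), ∀ ε ∈ Set.Ioc (0 : ℝ) S.eps0,
      S.lamE ε t x u (fun z => lam' * S.V z) ≤ c * (lam' * S.V x))

/-- Assumption (B). -/
def AssumptionB (S : RSSetup U) : Prop :=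
  (∀ τ ∈ Finset.Icc 1 S.T, ∀ t ∈ Finset.Icc 1 S.T, ∀ u : U,
    S.memBV fun x => S.f τ t x u) ∧
  (∀ τ ∈ Finset.Icc 1 S.T, S.memBV (S.g τ)) ∧
  (∀ t ∈ Finset.Icc 1 S.T, ∀ x : ℤ, Continuous fun u : U => S.f t t x u) ∧
  (∀ t ∈ Finset.Icc 1 S.T, ∀ x : ℤ, ∀ K : ℝ, IsCompact {u : U | S.f t t x u ≤ K})

/-- Assumption (C) with parameter `λ₀`: growth conditions over the sublevel sets
`B_{t,λ}(x) = {u : f_{t,t}(x,u) ≤ λ V(x)}`. -/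
def AssumptionC (S : RSSetup U) (lam0 : ℝ) : Prop :=
  0 < lam0 ∧ ∃ K1 : ℝ,
    ∀ lam' ∈ Set.Ioo (0 : ℝ) lam0, ∀ τ ∈ Finset.Icc 1 S.T, ∀ t ∈ Finset.Icc 1 S.T,
      (∀ c > K1, ∀ᶠ x in (Filter.cofinite : Filter ℤ), ∀ u : U,
        S.f t t x u ≤ lam' * S.V x → S.f τ t x u ≤ c * (lam' * S.V x)) ∧
      (∀ c > K1, ∀ᶠ x in (Filter.cofinite : Filter ℤ), ∀ ε ∈ Set.Ioo (0 : ℝ) S.eps0, ∀ u : U,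
        S.f t t x u ≤ lam' * S.V x →
          S.lamE ε t x u (fun z => lam' * S.V z) ≤ c * (lam' * S.V x))

/-- The cost `J^ε_{τ,t}(x;π)` of a Markov policy `π`, defined backward from
`J^ε_{τ,T+1} = g_τ`. -/
noncomputable def Jeps (S : RSSetup U) (ε : ℝ) (π : ℕ → ℤ → U) (τ t : ℕ) : ℤ → ℝ :=
  if h : S.T + 1 ≤ t then S.g τ
  else fun x => S.f τ t x (π t x) + S.lamE ε t x (π t x) (S.Jeps ε π τ (t + 1))
termination_by S.T + 1 - t
decreasing_by omega

/-- The limit cost `J_{τ,t}(x;π)` of a Markov policy `π`, defined backward from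
`J_{τ,T+1} = g_τ`. -/
noncomputable def Jlim (S : RSSetup U) (π : ℕ → ℤ → U) (τ t : ℕ) : ℤ → ℝ :=
  if h : S.T + 1 ≤ t then S.g τ
  else fun x => S.f τ t x (π t x) + S.lam t x (π t x) (S.Jlim π τ (t + 1))
termination_by S.T + 1 - t
decreasing_by omega

/-- `(η, Θ)` solves the `ε`-recursion system. -/
def SolvesEpsSystem (S : RSSetup U) (ε : ℝ) (η : ℕ → ℤ → U) (Θ : ℕ → ℕ → ℤ → ℝ) : Prop :=
  (∀ τ ∈ Finset.Icc 1 S.T, Θ τ (S.T + 1) = S.g τ) ∧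
  (∀ t ∈ Finset.Icc 1 S.T, ∀ (x : ℤ) (u : U),
    S.f t t x (η t x) + S.lamE ε t x (η t x) (Θ t (t + 1)) ≤
      S.f t t x u + S.lamE ε t x u (Θ t (t + 1))) ∧
  (∀ τ ∈ Finset.Icc 1 S.T, ∀ t ∈ Finset.Icc 1 S.T, ∀ x : ℤ,
    Θ τ t x = S.f τ t x (η t x) + S.lamE ε t x (η t x) (Θ τ (t + 1)))

/-- `(η, Θ)` solves the limit recursion system. -/
def SolvesLimSystem (S : RSSetup U) (η : ℕ → ℤ → U) (Θ : ℕ → ℕ → ℤ → ℝ) : Prop :=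
  (∀ τ ∈ Finset.Icc 1 S.T, Θ τ (S.T + 1) = S.g τ) ∧
  (∀ t ∈ Finset.Icc 1 S.T, ∀ (x : ℤ) (u : U),
    S.f t t x (η t x) + S.lam t x (η t x) (Θ t (t + 1)) ≤
      S.f t t x u + S.lam t x u (Θ t (t + 1))) ∧
  (∀ τ ∈ Finset.Icc 1 S.T, ∀ t ∈ Finset.Icc 1 S.T, ∀ x : ℤ,
    Θ τ t x = S.f τ t x (η t x) + S.lam t x (η t x) (Θ τ (t + 1)))

/-- `π` is a time-inconsistent `ε`-risk-sensitive equilibrium. -/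
def IsEpsEquilibrium (S : RSSetup U) (ε : ℝ) (π : ℕ → ℤ → U) : Prop :=
  ∀ t ∈ Finset.Icc 1 S.T, ∀ (x : ℤ) (u : U),
    S.Jeps ε π t t x ≤ S.f t t x u + S.lamE ε t x u (S.Jeps ε π t (t + 1))

/-- `π` is a time-inconsistent risk-sensitive equilibrium for the limit cost. -/
def IsLimEquilibrium (S : RSSetup U) (π : ℕ → ℤ → U) : Prop :=
  ∀ t ∈ Finset.Icc 1 S.T, ∀ (x : ℤ) (u : U),
    S.Jlim π t t x ≤ S.f t t x u + S.lam t x u (S.Jlim π t (t + 1))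

end RSSetup


namespace RSSetup

variable {U : Type*} [MetricSpace U]

theorem aux_low (S : RSSetup U) {ε : ℝ} (hε : ε ∈ Set.Ioc (0 : ℝ) S.eps0) {t : ℕ}
    (ht : t ∈ Finset.Icc 1 S.T) (x : ℤ) (u : U) (h : ℤ → ℝ) (c : ℝ) (hc : ∀ z, c ≤ h z)
    (hs : Summable fun z : ℤ => Real.exp (h z / ε) * S.q ε t x u z) :
    Real.exp (c / ε) ≤ (∑' z : ℤ, Real.exp (h z / ε) * S.q ε t x u z) ∧
      c ≤ S.lamE ε t x u h := by
  have h0 : 0 < ε := hε.1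
  have hq := S.q_pmf ε hε t ht x u
  have h1 : HasSum (fun z => Real.exp (c / ε) * S.q ε t x u z) (Real.exp (c / ε)) := by
    simpa using hq.mul_left (Real.exp (c / ε))
  have h2 : Real.exp (c / ε) ≤ (∑' z : ℤ, Real.exp (h z / ε) * S.q ε t x u z) := by
    refine hasSum_le (fun z => ?_) h1 hs.hasSum
    have := S.q_nonneg ε hε t ht x u z
    have := hc z
    gcongr
  refine ⟨h2, ?_⟩
  have h3 := Real.log_le_log (Real.exp_pos _) h2
  rw [Real.log_exp] at h3
  unfold lamE
  calc c = ε * (c / ε) := by field_simp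
    _ ≤ _ := by gcongr

theorem aux_up (S : RSSetup U) {ε : ℝ} (hε : ε ∈ Set.Ioc (0 : ℝ) S.eps0) {t : ℕ}
    (ht : t ∈ Finset.Icc 1 S.T) (x : ℤ) (u : U) (h k : ℤ → ℝ) (c C : ℝ) (hc : ∀ z, c ≤ h z)
    (hk : ∀ z, h z ≤ C + k z)
    (hs : Summable fun z : ℤ => Real.exp (k z / ε) * S.q ε t x u z) :
    (Summable fun z : ℤ => Real.exp (h z / ε) * S.q ε t x u z) ∧
      S.lamE ε t x u h ≤ C + S.lamE ε t x u k := by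
  have h0 : 0 < ε := hε.1
  have hle : ∀ z, Real.exp (h z / ε) * S.q ε t x u z ≤
      Real.exp (C / ε) * (Real.exp (k z / ε) * S.q ε t x u z) := by
    intro z
    rw [← mul_assoc, ← Real.exp_add, ← add_div]
    have := S.q_nonneg ε hε t ht x u z
    have := hk z
    gcongr
  have hsum : Summable fun z : ℤ => Real.exp (h z / ε) * S.q ε t x u z :=
    Summable.of_nonneg_of_le
      (fun z => mul_nonneg (Real.exp_pos _).le (S.q_nonneg ε hε t ht x u z)) hle
      (hs.mul_left _)
  refine ⟨hsum, ?_⟩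
  have hp := (Real.exp_pos _).trans_le (aux_low S hε ht x u h c hc hsum).1
  have hp2 := (Real.exp_pos _).trans_le
    (aux_low S hε ht x u k (c - C) (fun z => by linarith [hc z, hk z]) hs).1
  have h1 := hsum.tsum_le_tsum hle (hs.mul_left _)
  rw [tsum_mul_left] at h1
  have h2 := Real.log_le_log hp h1
  rw [Real.log_mul (Real.exp_pos _).ne' hp2.ne', Real.log_exp] at h2
  unfold lamE
  calc _ ≤ ε * (C / ε + Real.log (∑' z : ℤ, Real.exp (k z / ε) * S.q ε t x u z)) := by gcongr
    _ = _ := by field_simp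

theorem V_ev (S : RSSetup U) (K : ℝ) : ∀ᶠ x in (cofinite : Filter ℤ), K < S.V x := by
  have := (S.V_infFinite K).compl_mem_cofinite
  filter_upwards [this] with x hx
  simpa using hx

theorem aux_mem (S : RSSetup U) (F : ℤ → ℝ) (c K lam0 : ℝ) (hl : 0 < lam0)
    (hc : ∀ x, c ≤ F x)
    (hF : ∀ δ ∈ Set.Ioo (0 : ℝ) lam0, ∃ C : ℝ, ∀ᶠ x in (cofinite : Filter ℤ),
      F x ≤ C + K * (δ * S.V x)) : S.memBV F := by
  refine ⟨⟨c, by rintro _ ⟨x, rfl⟩; exact hc x⟩, ?_⟩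
  rw [Metric.tendsto_nhds]
  intro η hη
  have hK : 0 < |K| + 1 := by positivity
  obtain ⟨δ, hδ0, hδ⟩ := exists_between (lt_min hl (show 0 < η / 2 / (|K| + 1) by positivity))
  have hδ1 := hδ.trans_le (min_le_left _ _)
  have hδ2 := hδ.trans_le (min_le_right _ _)
  rw [lt_div_iff₀ hK] at hδ2
  obtain ⟨C, hC⟩ := hF δ ⟨hδ0, hδ1⟩
  filter_upwards [hC, S.V_ev ((|C| + |c|) / (η / 2))] with x h1 h2
  have hV := S.V_pos x
  rw [div_lt_iff₀ (by positivity)] at h2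
  rw [Real.dist_eq, sub_zero, abs_of_nonneg (by positivity), div_lt_iff₀ hV, abs_lt]
  have h3 : K * (δ * S.V x) ≤ (η / 2) * S.V x := by
    rw [← mul_assoc]
    have : K * δ ≤ η / 2 := by nlinarith [le_abs_self K]
    gcongr
  have h4 := hc x
  have := le_abs_self C
  have := neg_abs_le c
  have := abs_nonneg c
  have := abs_nonneg C
  have : 0 < η * S.V x := by positivity
  constructor <;> nlinarith

theorem aux_dom (S : RSSetup U) (F : ℤ → ℝ) (hF : S.memBV F) (δ : ℝ) (hδ : 0 < δ) :
    ∃ C : ℝ, ∀ x, F x ≤ C + δ * S.V x := by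
  have h := hF.2.eventually (gt_mem_nhds hδ)
  rw [Filter.eventually_cofinite] at h
  obtain ⟨M, hM⟩ := (h.image F).bddAbove
  refine ⟨|M|, fun x => ?_⟩
  have hV := S.V_pos x
  have hp : 0 < δ * S.V x := by positivity
  by_cases hx : |F x| / S.V x < δ
  · rw [div_lt_iff₀ hV] at hx
    linarith [le_abs_self (F x), abs_nonneg M]
  · have := hM ⟨x, hx, rfl⟩
    linarith [le_abs_self M]

end RSSetup

/-- Under Assumption (A), for any family `{h^ε} ∈ 𝓑_V`, each `t ∈ {1,…,T}`
and each `u ∈ U`, the family `{Λ^ε_t(·,u;h^ε)}` belongs to `𝓑_V`; in particular each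
`Λ^ε_t(x,u;h^ε)` is finite (the defining sum converges). -/
theorem statement3 {U : Type*} [MetricSpace U] [CompleteSpace U]
    (S : RSSetup U) (lam0 : ℝ) (hA : S.AssumptionA lam0)
    (hfam : ℝ → ℤ → ℝ) (hmem : S.memFam hfam)
    (t : ℕ) (ht : t ∈ Finset.Icc 1 S.T) (u : U) :
    (∀ ε ∈ Set.Ioc (0 : ℝ) S.eps0, ∀ x : ℤ,
      Summable fun z : ℤ => Real.exp (hfam ε z / ε) * S.q ε t x u z) ∧
    S.memFam fun ε x => S.lamE ε t x u (hfam ε) := by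
  obtain ⟨hl, hA1, -, hA3⟩ := hA
  obtain ⟨-, ⟨c, hc⟩, hbdd, hsup⟩ := hmem
  obtain ⟨Ku, hKu⟩ := hA3 t ht u
  have hdom : ∀ δ : ℝ, 0 < δ → ∃ C : ℝ, ∀ ε ∈ Set.Ioc (0 : ℝ) S.eps0, ∀ z,
      hfam ε z ≤ C + δ * S.V z := by
    intro δ hδ
    obtain ⟨C, hC⟩ := S.aux_dom _ hsup δ hδ
    exact ⟨C, fun ε hε z => (le_csSup (hbdd z) ⟨ε, hε, rfl⟩).trans (hC z)⟩
  have hsV : ∀ δ ≤ lam0, ∀ ε ∈ Set.Ioc (0 : ℝ) S.eps0, ∀ x : ℤ,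
      Summable fun z : ℤ => Real.exp (δ * S.V z / ε) * S.q ε t x u z := by
    intro δ hδ ε hε x
    refine Summable.of_nonneg_of_le
      (fun z => mul_nonneg (Real.exp_pos _).le (S.q_nonneg ε hε t ht x u z)) (fun z => ?_)
      ((hA1 t ht x u).1 ε hε)
    have := S.q_nonneg ε hε t ht x u z
    have := S.V_pos z
    have := hε.1
    gcongr
  obtain ⟨C0, hC0⟩ := hdom lam0 hl
  have hup0 := fun ε hε x => S.aux_up hε ht x u (hfam ε) (fun z => lam0 * S.V z) c C0
    (hc ε hε) (hC0 ε hε) (hsV lam0 le_rfl ε hε x)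
  have hlow := fun ε hε x => (S.aux_low hε ht x u (hfam ε) c (hc ε hε) (hup0 ε hε x).1).2
  have hB : ∀ x, BddAbove ((fun ε => S.lamE ε t x u (hfam ε)) '' Set.Ioc (0 : ℝ) S.eps0) := by
    intro x
    obtain ⟨C, hC⟩ := (hA1 t ht x u).2
    refine ⟨C0 + C, ?_⟩
    rintro _ ⟨ε, hε, rfl⟩
    exact (hup0 ε hε x).2.trans (by linarith [hC ε hε])
  have hev : ∀ δ ∈ Set.Ioo (0 : ℝ) lam0, ∃ C : ℝ, ∀ᶠ x in (cofinite : Filter ℤ),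
      ∀ ε ∈ Set.Ioc (0 : ℝ) S.eps0, S.lamE ε t x u (hfam ε) ≤ C + Ku * (δ * S.V x) := by
    intro δ hδ
    obtain ⟨C, hC⟩ := hdom δ hδ.1
    obtain ⟨k, hk, hkx⟩ := hKu δ hδ
    refine ⟨C, ?_⟩
    filter_upwards [hkx] with x hx ε hε
    have h1 := (S.aux_up hε ht x u (hfam ε) (fun z => δ * S.V z) c C
      (hc ε hε) (hC ε hε) (hsV δ hδ.2.le ε hε x)).2
    have h2 := hx ε hε
    have h3 : k * (δ * S.V x) ≤ Ku * (δ * S.V x) :=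
      mul_le_mul_of_nonneg_right hk.le (mul_nonneg hδ.1.le (S.V_pos x).le)
    linarith
  have he0 : S.eps0 ∈ Set.Ioc (0 : ℝ) S.eps0 := ⟨S.eps0_pos, le_rfl⟩
  refine ⟨fun ε hε x => (hup0 ε hε x).1, fun ε hε => ?_, ⟨c, hlow⟩, hB, ?_⟩
  · refine S.aux_mem _ c Ku lam0 hl (hlow ε hε) fun δ hδ => ?_
    obtain ⟨C, hC⟩ := hev δ hδ
    exact ⟨C, hC.mono fun x hx => hx ε hε⟩
  · refine S.aux_mem _ c Ku lam0 hl
      (fun x => (hlow _ he0 x).trans (le_csSup (hB x) ⟨_, he0, rfl⟩)) fun δ hδ => ?_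
    obtain ⟨C, hC⟩ := hev δ hδ
    refine ⟨C, hC.mono fun x hx => csSup_le ⟨_, ⟨_, he0, rfl⟩⟩ ?_⟩
    rintro _ ⟨ε, hε, rfl⟩
    exact hx ε hε
end

section
/- Under Assumption (A): for any h ∈ B_V, each t ∈ {1,…,T} and each u ∈ U, the function x ↦ Λ_t(x,u;h) belongs to B_V. -/
open Filter Topology

lemma aux_bound {U : Type*} [MetricSpace U] (S : RSSetup U) (h : ℤ → ℝ) (hh : S.memBV h)
    (l : ℝ) (hl : 0 < l) : ∃ C : ℝ, 0 ≤ C ∧ ∀ z, h z ≤ C + l * S.V z := by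
  have h1 : ∀ᶠ z in (cofinite : Filter ℤ), |h z| / S.V z < l := hh.2.eventually (gt_mem_nhds hl)
  have hf : {z : ℤ | ¬ |h z| / S.V z < l}.Finite := h1
  obtain ⟨C, hC⟩ := (hf.image h).bddAbove
  refine ⟨max C 0, le_max_right _ _, fun z => ?_⟩
  have hV := S.V_pos z
  have hlV : 0 < l * S.V z := by positivity
  by_cases hz : |h z| / S.V z < l
  · rw [div_lt_iff₀ hV] at hz
    have := le_abs_self (h z)
    have := le_max_right C 0
    linarith
  · have : h z ≤ C := hC ⟨z, hz, rfl⟩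
    have := le_max_left C 0
    linarith

lemma aux_lamE {U : Type*} [MetricSpace U] (S : RSSetup U) (lam0 : ℝ) (h : ℤ → ℝ)
    (t : ℕ) (ht : t ∈ Finset.Icc 1 S.T) (x : ℤ) (u : U) (ε : ℝ) (hε : ε ∈ Set.Ioc (0 : ℝ) S.eps0)
    (hs : Summable fun z : ℤ => Real.exp (lam0 * S.V z / ε) * S.q ε t x u z)
    (l : ℝ) (hl : l ≤ lam0) (C m : ℝ) (hC : ∀ z, h z ≤ C + l * S.V z) (hm : ∀ z, m ≤ h z) :
    m ≤ S.lamE ε t x u h ∧ S.lamE ε t x u h ≤ C + S.lamE ε t x u (fun z => l * S.V z) := by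
  have e0 := hε.1
  have hq := S.q_nonneg ε hε t ht x u
  have hq1 := S.q_pmf ε hε t ht x u
  have s1 : Summable fun z : ℤ => Real.exp (l * S.V z / ε) * S.q ε t x u z := by
    refine Summable.of_nonneg_of_le (fun z => mul_nonneg (Real.exp_pos _).le (hq z)) (fun z => ?_) hs
    have := hq z
    have := (S.V_pos z).le
    gcongr
  have s2' := s1.mul_left (Real.exp (C / ε))
  have key : ∀ z, Real.exp (h z / ε) * S.q ε t x u z ≤
      Real.exp (C / ε) * (Real.exp (l * S.V z / ε) * S.q ε t x u z) := by
    intro z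
    rw [← mul_assoc, ← Real.exp_add, ← add_div]
    have := hq z
    have := hC z
    gcongr
  have s2 : Summable fun z : ℤ => Real.exp (h z / ε) * S.q ε t x u z :=
    Summable.of_nonneg_of_le (fun z => mul_nonneg (Real.exp_pos _).le (hq z)) key s2'
  have hle := s2.tsum_le_tsum key s2'
  rw [tsum_mul_left] at hle
  have hge : Real.exp (m / ε) ≤ ∑' z : ℤ, Real.exp (h z / ε) * S.q ε t x u z := by
    have := (hq1.summable.mul_left (Real.exp (m / ε))).tsum_le_tsum
      (g := fun z : ℤ => Real.exp (h z / ε) * S.q ε t x u z) (fun z => by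
        have := hq z
        have := hm z
        gcongr) s2
    rwa [tsum_mul_left, hq1.tsum_eq, mul_one] at this
  unfold RSSetup.lamE
  set A := ∑' z : ℤ, Real.exp (h z / ε) * S.q ε t x u z
  set B := ∑' z : ℤ, Real.exp (l * S.V z / ε) * S.q ε t x u z
  have hA : 0 < A := (Real.exp_pos _).trans_le hge
  have hB : 0 < B := pos_of_mul_pos_right (hA.trans_le hle) (Real.exp_pos _).le
  constructor
  · have := (Real.le_log_iff_exp_le hA).2 hge
    rwa [div_le_iff₀' e0] at this
  · have h2 := Real.log_le_log hA hle
    rw [Real.log_mul (Real.exp_pos _).ne' hB.ne', Real.log_exp] at h2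
    calc ε * Real.log A ≤ ε * (C / ε + Real.log B) := by gcongr
      _ = C + ε * Real.log B := by field_simp

/-- Under Assumption (A), for any `h ∈ B_V`, each `t ∈ {1,…,T}` and each
`u ∈ U`, the function `x ↦ Λ_t(x,u;h)` belongs to `B_V`. -/
theorem statement4 {U : Type*} [MetricSpace U] [CompleteSpace U]
    (S : RSSetup U) (lam0 : ℝ) (hA : S.AssumptionA lam0)
    (h : ℤ → ℝ) (hh : S.memBV h)
    (t : ℕ) (ht : t ∈ Finset.Icc 1 S.T) (u : U) :
    S.memBV fun x => S.lam t x u h := by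
  obtain ⟨h0, A1, A2, A3⟩ := hA
  obtain ⟨m, hm'⟩ := hh.1
  have hm : ∀ z, m ≤ h z := fun z => hm' ⟨z, rfl⟩
  have lim : ∀ x, Tendsto (fun ε => S.lamE ε t x u h) (𝓝[>] 0) (𝓝 (S.lam t x u h)) :=
    fun x => (A2 t ht x h hh).2 u (fun _ => u) tendsto_const_nhds
  have ev : ∀ᶠ ε in 𝓝[>] (0:ℝ), ε ∈ Set.Ioc (0:ℝ) S.eps0 := Ioc_mem_nhdsGT S.eps0_pos
  have low : ∀ x, m ≤ S.lam t x u h := by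
    intro x
    obtain ⟨C, -, hC⟩ := aux_bound S h hh lam0 h0
    refine ge_of_tendsto (lim x) (ev.mono fun ε hε => ?_)
    exact (aux_lamE S lam0 h t ht x u ε hε ((A1 t ht x u).1 ε hε) lam0 le_rfl C m hC hm).1
  refine ⟨⟨m, by rintro _ ⟨x, rfl⟩; exact low x⟩, ?_⟩
  obtain ⟨K, hK⟩ := A3 t ht u
  rw [Metric.tendsto_nhds]
  intro δ hδ
  obtain ⟨l, hl0, hl1, hl2⟩ : ∃ l : ℝ, 0 < l ∧ l < lam0 ∧ |K| * l ≤ δ / 2 := by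
    refine ⟨min (lam0 / 2) (δ / 2 / (|K| + 1)), by positivity,
      (min_le_left _ _).trans_lt (by linarith), ?_⟩
    have h3 : min (lam0 / 2) (δ / 2 / (|K| + 1)) ≤ δ / 2 / (|K| + 1) := min_le_right _ _
    have h4 : 0 < min (lam0 / 2) (δ / 2 / (|K| + 1)) := by positivity
    rw [le_div_iff₀ (by positivity)] at h3
    nlinarith
  obtain ⟨C, hC0, hC⟩ := aux_bound S h hh l hl0
  obtain ⟨c, hcK, hc⟩ := hK l ⟨hl0, hl1⟩
  have hVbig : ∀ᶠ x in (cofinite : Filter ℤ), (C + |m|) / (δ / 2) < S.V x := by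
    have := S.V_infFinite ((C + |m|) / (δ / 2))
    filter_upwards [this.compl_mem_cofinite] with x hx
    simpa using hx
  filter_upwards [hc, hVbig] with x hx hV
  have hVp := S.V_pos x
  have up : S.lam t x u h ≤ C + c * (l * S.V x) := by
    refine le_of_tendsto (lim x) (ev.mono fun ε hε => ?_)
    have := (aux_lamE S lam0 h t ht x u ε hε ((A1 t ht x u).1 ε hε) l hl1.le C m hC hm).2
    have := hx ε hε
    linarith
  have up2 : c * (l * S.V x) ≤ δ / 2 * S.V x := by
    have : c * l ≤ |K| * l := by
      have := le_abs_self K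
      gcongr
      linarith
    calc c * (l * S.V x) = c * l * S.V x := by ring
      _ ≤ δ / 2 * S.V x := by
        gcongr
        linarith
  rw [div_lt_iff₀ (by positivity)] at hV
  have hl := low x
  rw [Real.dist_eq, sub_zero, abs_of_nonneg (by positivity), div_lt_iff₀ hVp, abs_lt]
  have := neg_abs_le m
  have := abs_nonneg m
  have : 0 < δ * S.V x := by positivity
  constructor <;> linarith
end

section
/- Fix κ > 0 and ε₀ > 0 such that κ·∑_{z∈ℤ, z≠0} exp(−z²/ε₀) ≤ 1. For 0 < ε ≤ ε₀ and x, u ∈ ℤ, define the probability mass function q^ε(·;x,u) on ℤ by q^ε(z;x,u) = κ·exp(−ε^{−1}(z−x−u)²) for z ≠ x+u and q^ε(x+u;x,u) = 1 − κ·∑_{z≠0} exp(−ε^{−1}z²). Then for every function h : ℤ → ℝ with lim_{|z|→∞} h(z)/z² = 0 and every x, u ∈ ℤ: lim_{ε→0⁺} ε·log(∑_{z∈ℤ} exp(ε^{−1}h(z)) q^ε(z;x,u)) = sup_{z∈ℤ} [h(z) − (z−x−u)²]. In particular the one-step transition satisfies a large deviation limit with rate function I(z;x,u) = (z−x−u)².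 -/
open Filter Topology

lemma aux_gauss : Summable (fun z : ℤ => Real.exp (-(z : ℝ) ^ 2 / 2)) := by
  have h1 : Summable (fun z : ℤ => 2 * (1 / (z : ℝ) ^ 2)) :=
    (Real.summable_one_div_int_pow.mpr (by norm_num)).mul_left 2
  refine Summable.of_norm_bounded_eventually h1 ?_
  have : ∀ᶠ z : ℤ in cofinite, z ≠ 0 := by
    simpa using (Set.finite_singleton (0 : ℤ)).compl_mem_cofinite
  filter_upwards [this] with z hz
  have hz' : 0 < (z : ℝ) ^ 2 := by positivity
  rw [Real.norm_eq_abs, abs_of_pos (Real.exp_pos _), neg_div, Real.exp_neg]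
  have h2 := Real.add_one_le_exp ((z : ℝ) ^ 2 / 2)
  have h3 : (2 : ℝ) * (1 / (z : ℝ) ^ 2) = ((z : ℝ) ^ 2 / 2)⁻¹ := by field_simp
  rw [h3]
  exact inv_anti₀ (by positivity) (by linarith)

lemma aux_bound_s18 (h : ℤ → ℝ) (y : ℤ)
    (hh : Tendsto (fun z : ℤ => h z / ((z : ℝ)) ^ 2) Filter.cofinite (nhds 0)) :
    ∃ A : ℝ, ∀ z : ℤ, h z - ((z : ℝ) - y) ^ 2 ≤ A + -((z : ℝ) - y) ^ 2 / 2 := by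
  have h1 : ∀ᶠ z : ℤ in cofinite, h z / ((z : ℝ)) ^ 2 < 1 / 4 :=
    hh.eventually_lt_const (by norm_num)
  have h0 : ∀ᶠ z : ℤ in cofinite, z ≠ 0 := by
    simpa using (Set.finite_singleton (0 : ℤ)).compl_mem_cofinite
  have h2 := h1.and h0
  rw [eventually_cofinite] at h2
  obtain ⟨B, hB⟩ := (h2.image h).bddAbove
  refine ⟨max B ((y : ℝ) ^ 2 / 2), fun z => ?_⟩
  by_cases hz : h z / ((z : ℝ)) ^ 2 < 1 / 4 ∧ z ≠ 0
  · obtain ⟨ha, hb⟩ := hz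
    have hz' : 0 < (z : ℝ) ^ 2 := by positivity
    rw [div_lt_iff₀ hz'] at ha
    have := le_max_right B ((y : ℝ) ^ 2 / 2)
    nlinarith [sq_nonneg ((z : ℝ) - 2 * y)]
  · have h3 : h z ≤ B := hB ⟨z, hz, rfl⟩
    have := le_max_left B ((y : ℝ) ^ 2 / 2)
    nlinarith [sq_nonneg ((z : ℝ) - y)]

lemma aux_tail : Tendsto (fun ε : ℝ => ∑' w : {w : ℤ // w ≠ 0}, Real.exp (-((w : ℤ) : ℝ) ^ 2 / ε))
    (𝓝[>] 0) (𝓝 0) := by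
  have hG : Summable (fun w : {w : ℤ // w ≠ 0} => Real.exp (-((w : ℤ) : ℝ) ^ 2 / 2)) :=
    aux_gauss.subtype _
  have key : ∀ ε : ℝ, 0 < ε → ε < 1 → ∀ w : {w : ℤ // w ≠ 0},
      Real.exp (-((w : ℤ) : ℝ) ^ 2 / ε) ≤
        Real.exp (1 / 2 - ε⁻¹) * Real.exp (-((w : ℤ) : ℝ) ^ 2 / 2) := by
    rintro ε h0 h1 ⟨w, hw⟩
    rw [← Real.exp_add, Real.exp_le_exp]
    have hw1 : (1 : ℝ) ≤ (w : ℝ) ^ 2 := by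
      have : 1 ≤ w ^ 2 := by have : 0 < w ^ 2 := by positivity
                             omega
      exact_mod_cast this
    have : 1 ≤ ε⁻¹ := (one_le_inv₀ h0).2 h1.le
    simp only [div_eq_mul_inv _ ε]
    nlinarith [mul_nonneg (sub_nonneg.2 hw1) (by linarith : 0 ≤ ε⁻¹ - 1 / 2)]
  have hlim : Tendsto (fun ε : ℝ => Real.exp (1 / 2 - ε⁻¹) *
      ∑' w : {w : ℤ // w ≠ 0}, Real.exp (-((w : ℤ) : ℝ) ^ 2 / 2)) (𝓝[>] 0) (𝓝 0) := by
    have : Tendsto (fun ε : ℝ => Real.exp (1 / 2 - ε⁻¹)) (𝓝[>] 0) (𝓝 0) :=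
      Real.tendsto_exp_atBot.comp
        (tendsto_atBot_add_const_left _ _ (tendsto_neg_atTop_atBot.comp tendsto_inv_nhdsGT_zero))
    simpa using this.mul_const _
  refine tendsto_of_tendsto_of_tendsto_of_le_of_le' tendsto_const_nhds hlim
    (Eventually.of_forall fun ε => tsum_nonneg fun _ => (Real.exp_pos _).le) ?_
  filter_upwards [Ioo_mem_nhdsGT (zero_lt_one (α := ℝ))] with ε hε
  rw [← tsum_mul_left]
  have hs := hG.mul_left (Real.exp (1 / 2 - ε⁻¹))
  exact Summable.tsum_le_tsum (key ε hε.1 hε.2)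
    (Summable.of_nonneg_of_le (fun _ => (Real.exp_pos _).le) (key ε hε.1 hε.2) hs) hs

/-- For the random-walk transition kernel
`q^ε(z;x,u) = κ exp(-(z-x-u)²/ε)` for `z ≠ x+u` and
`q^ε(x+u;x,u) = 1 - κ ∑_{w≠0} exp(-w²/ε)`, and any `h : ℤ → ℝ` with `h(z)/z² → 0` as
`|z| → ∞`, the `ε`-scaled log-exponential moments converge as `ε → 0⁺` to
`sup_z [h(z) - (z-x-u)²]`; i.e. the one-step transition satisfies a large deviation limit
with rate function `I(z;x,u) = (z-x-u)²`. -/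
theorem statement18 (κ ε₀ : ℝ) (hκ : 0 < κ) (hε₀ : 0 < ε₀)
    (hsum : κ * ∑' w : {w : ℤ // w ≠ 0}, Real.exp (-((w : ℤ) : ℝ) ^ 2 / ε₀) ≤ 1)
    (q : ℝ → ℤ → ℤ → ℤ → ℝ)
    (hq : ∀ (ε : ℝ) (x u z : ℤ),
      q ε x u z =
        if z = x + u then 1 - κ * ∑' w : {w : ℤ // w ≠ 0}, Real.exp (-((w : ℤ) : ℝ) ^ 2 / ε)
        else κ * Real.exp (-(((z - x - u : ℤ) : ℝ)) ^ 2 / ε))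
    (h : ℤ → ℝ)
    (hh : Tendsto (fun z : ℤ => h z / ((z : ℝ)) ^ 2) Filter.cofinite (nhds 0))
    (x u : ℤ) :
    Tendsto (fun ε : ℝ => ε * Real.log (∑' z : ℤ, Real.exp (h z / ε) * q ε x u z))
      (nhdsWithin 0 (Set.Ioi 0))
      (nhds (⨆ z : ℤ, (h z - (((z - x - u : ℤ) : ℝ)) ^ 2))) := by
  obtain ⟨A, hA⟩ := aux_bound_s18 h (x + u) hh
  obtain ⟨g, hg⟩ : ∃ g : ℤ → ℝ, g = fun z : ℤ => h z - (((z - x - u : ℤ) : ℝ)) ^ 2 := ⟨_, rfl⟩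
  have hgz : ∀ z, g z = h z - (((z - x - u : ℤ) : ℝ)) ^ 2 := fun z => by rw [hg]
  rw [← hg]
  have hgA : ∀ z, g z ≤ A + -(((z - (x + u) : ℤ) : ℝ)) ^ 2 / 2 := by
    intro z
    have := hA z
    rw [hgz]
    push_cast at this ⊢
    rw [sub_sub]
    exact this
  have hbdd : BddAbove (Set.range g) := by
    refine ⟨A, ?_⟩
    rintro _ ⟨z, rfl⟩
    have := hgA z
    nlinarith [sq_nonneg (((z - (x + u) : ℤ) : ℝ))]
  set S := ⨆ z, g z with hS
  have hgS : ∀ z, g z ≤ S := le_ciSup hbdd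
  have hsg : Summable (fun z => Real.exp (g z)) := by
    have h1 : Summable (fun z : ℤ => Real.exp (-(((z - (x + u) : ℤ) : ℝ)) ^ 2 / 2)) :=
      (Equiv.subRight (x + u)).summable_iff.mpr aux_gauss
    refine Summable.of_nonneg_of_le (fun _ => (Real.exp_pos _).le) (fun z => ?_)
      (h1.mul_left (Real.exp A))
    rw [← Real.exp_add, Real.exp_le_exp]
    exact hgA z
  set K := Real.exp (-S) * ∑' z, Real.exp (g z) with hK
  have hKpos : 0 < K :=
    mul_pos (Real.exp_pos _) (hsg.tsum_pos (fun _ => (Real.exp_pos _).le) 0 (Real.exp_pos _))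
  set M := max κ 1 with hM
  have hMpos : 0 < M := lt_max_of_lt_left hκ
  set c := min κ (1 / 2) with hc
  have hcpos : 0 < c := lt_min hκ (by norm_num)
  have hT : ∀ᶠ ε in 𝓝[>] (0 : ℝ),
      κ * ∑' w : {w : ℤ // w ≠ 0}, Real.exp (-((w : ℤ) : ℝ) ^ 2 / ε) < 1 / 2 := by
    have := aux_tail.const_mul κ
    rw [mul_zero] at this
    exact this.eventually_lt_const (by norm_num)
  have hmain : ∀ᶠ ε in 𝓝[>] (0 : ℝ),
      S + ε * Real.log c ≤ ε * Real.log (∑' z : ℤ, Real.exp (h z / ε) * q ε x u z) ∧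
      ε * Real.log (∑' z : ℤ, Real.exp (h z / ε) * q ε x u z) ≤ S + ε * Real.log (M * K) := by
    filter_upwards [hT, Ioo_mem_nhdsGT (zero_lt_one (α := ℝ))] with ε hTε hε
    obtain ⟨h0, h1⟩ := hε
    have hTn : 0 ≤ κ * ∑' w : {w : ℤ // w ≠ 0}, Real.exp (-((w : ℤ) : ℝ) ^ 2 / ε) :=
      mul_nonneg hκ.le (tsum_nonneg fun _ => (Real.exp_pos _).le)
    have hinv : 1 ≤ ε⁻¹ := (one_le_inv₀ h0).2 h1.le
    have hq2 : ∀ z, c * Real.exp (g z / ε) ≤ Real.exp (h z / ε) * q ε x u z ∧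
        Real.exp (h z / ε) * q ε x u z ≤ M * Real.exp (g z / ε) := by
      intro z
      rw [hq]
      split_ifs with hz
      · have : g z = h z := by rw [hgz, hz]; push_cast; ring
        rw [this]
        have e := Real.exp_pos (h z / ε)
        have hc2 : c ≤ 1 / 2 := min_le_right _ _
        have hM2 : 1 ≤ M := le_max_right _ _
        constructor <;> rw [mul_comm (Real.exp (h z / ε))] <;>
          exact mul_le_mul_of_nonneg_right (by linarith) e.le
      · have : Real.exp (h z / ε) * (κ * Real.exp (-(((z - x - u : ℤ) : ℝ)) ^ 2 / ε))
            = κ * Real.exp (g z / ε) := by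
          rw [mul_left_comm, ← Real.exp_add, hgz]
          congr 2
          ring
        rw [this]
        exact ⟨mul_le_mul_of_nonneg_right (min_le_left _ _) (Real.exp_pos _).le,
          mul_le_mul_of_nonneg_right (le_max_left _ _) (Real.exp_pos _).le⟩
    have hge : ∀ z, Real.exp (g z / ε) ≤ Real.exp (S / ε) * (Real.exp (-S) * Real.exp (g z)) := by
      intro z
      rw [← Real.exp_add, ← Real.exp_add, Real.exp_le_exp, div_eq_mul_inv, div_eq_mul_inv]
      nlinarith [mul_nonneg (sub_nonneg.2 (hgS z)) (sub_nonneg.2 hinv)]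
    have hub : ∀ z, Real.exp (h z / ε) * q ε x u z ≤
        M * (Real.exp (S / ε) * (Real.exp (-S) * Real.exp (g z))) := fun z =>
      (hq2 z).2.trans (mul_le_mul_of_nonneg_left (hge z) hMpos.le)
    have hsU : Summable (fun z => M * (Real.exp (S / ε) * (Real.exp (-S) * Real.exp (g z)))) :=
      ((hsg.mul_left _).mul_left _).mul_left _
    have hnn : ∀ z, 0 ≤ Real.exp (h z / ε) * q ε x u z := fun z =>
      (mul_pos hcpos (Real.exp_pos _)).le.trans (hq2 z).1
    have hsq : Summable (fun z => Real.exp (h z / ε) * q ε x u z) :=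
      Summable.of_nonneg_of_le hnn hub hsU
    have hle : ∑' z : ℤ, Real.exp (h z / ε) * q ε x u z ≤ Real.exp (S / ε) * (M * K) := by
      refine (hsq.tsum_le_tsum hub hsU).trans (le_of_eq ?_)
      rw [tsum_mul_left, tsum_mul_left, tsum_mul_left, ← hK]
      ring
    have hlo : ∀ z, Real.exp (g z / ε) * c ≤ ∑' z : ℤ, Real.exp (h z / ε) * q ε x u z := by
      intro z
      rw [mul_comm]
      exact (hq2 z).1.trans (hsq.le_tsum z fun j _ => hnn j)
    have hlog : ∀ a b : ℝ, 0 < b → ε * Real.log (Real.exp (a / ε) * b) = a + ε * Real.log b := by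
      intro a b hb
      rw [Real.log_mul (Real.exp_pos _).ne' hb.ne', Real.log_exp, mul_add,
        mul_div_cancel₀ _ h0.ne']
    have hpos : ∀ z, 0 < Real.exp (g z / ε) * c := fun z => mul_pos (Real.exp_pos _) hcpos
    constructor
    · rw [← le_sub_iff_add_le]
      refine ciSup_le fun z => ?_
      rw [le_sub_iff_add_le, ← hlog _ _ hcpos]
      exact mul_le_mul_of_nonneg_left (Real.log_le_log (hpos z) (hlo z)) h0.le
    · rw [← hlog _ _ (mul_pos hMpos hKpos)]
      exact mul_le_mul_of_nonneg_left
        (Real.log_le_log ((hpos 0).trans_le (hlo 0)) hle) h0.le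
  have hl : ∀ b : ℝ, Tendsto (fun ε : ℝ => S + ε * b) (𝓝[>] 0) (𝓝 S) := by
    intro b
    have : Tendsto (fun ε : ℝ => S + ε * b) (𝓝 0) (𝓝 (S + 0 * b)) :=
      (by fun_prop : Continuous fun ε : ℝ => S + ε * b).tendsto 0
    rw [zero_mul, add_zero] at this
    exact this.mono_left nhdsWithin_le_nhds
  exact tendsto_of_tendsto_of_tendsto_of_le_of_le' (hl _) (hl _)
    (hmain.mono fun _ h => h.1) (hmain.mono fun _ h => h.2)
end
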